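/- arXiv:1506.03655 — 8 statements merged into one kernel-verified Lean document; each statement's English description precedes it below -/
import Mathlib

section
/- Let L be a complex Lie algebra. Then for any complex numbers α, β, γ one has the equality of subspaces D(α,β,γ)(L) = D(0, β−γ, γ−β)(L) ∩ D(2α, β+γ, β+γ)(L). -/
/-- The space of `(α,β,γ)`-derivations of a complex Lie algebra `L`:
linear endomorphisms `D` with `α • D ⁅x,y⁆ = β • ⁅D x, y⁆ + γ • ⁅x, D y⁆`. -/
def abgDer (α β γ : ℂ) (L : Type*) [LieRing L] [LieAlgebra ℂ L] :
    Submodule ℂ (Module.End ℂ L) where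
  carrier := {D | ∀ x y : L, α • D ⁅x, y⁆ = β • ⁅D x, y⁆ + γ • ⁅x, D y⁆}
  zero_mem' := by intro x y; simp
  add_mem' := by
    intro a b ha hb x y
    simp only [LinearMap.add_apply, smul_add, add_lie, lie_add]
    rw [ha x y, hb x y]
    abel
  smul_mem' := by
    intro c D hD x y
    simp only [LinearMap.smul_apply, smul_lie, lie_smul]
    rw [smul_comm α c, hD x y, smul_add, smul_comm c β, smul_comm c γ]


/-- For a complex Lie algebra `L` and any `α β γ : ℂ`,
`D(α,β,γ)(L) = D(0, β−γ, γ−β)(L) ∩ D(2α, β+γ, β+γ)(L)`. -/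
theorem abgDer_eq_inf (L : Type*) [LieRing L] [LieAlgebra ℂ L] (α β γ : ℂ) :
    abgDer α β γ L = abgDer 0 (β - γ) (γ - β) L ⊓ abgDer (2 * α) (β + γ) (β + γ) L := by
  ext D
  change (∀ x y : L, _) ↔ (∀ x y : L, _) ∧ (∀ x y : L, _)
  refine ⟨fun h => ?_, fun ⟨h₁, h₂⟩ x y => ?_⟩
  · have h_swap (x y : L) : α • D ⁅x, y⁆ = β • ⁅x, D y⁆ + γ • ⁅D x, y⁆ := by
      have hyx := h y x
      rw [← lie_skew x y, ← lie_skew x (D y), ← lie_skew (D x) y, map_neg, smul_neg, hyx]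
      module
    refine ⟨fun x y => ?_, fun x y => ?_⟩
    · linear_combination (norm := module) h x y - h_swap x y
    · linear_combination (norm := module) h x y + h_swap x y
  · linear_combination (norm := module) (1 / 2 : ℂ) • h₁ x y + (1 / 2 : ℂ) • h₂ x y
end

section
/- Let L be a complex Lie algebra. Then for any complex numbers α, β, γ there exists a complex number δ such that the subspace D(α,β,γ)(L) of End(L) is equal to one of the following four subspaces: D(δ,0,0)(L), D(δ,1,−1)(L), D(δ,1,0)(L), or D(δ,1,1)(L). -/
section

variable {L : Type*} [LieRing L] [LieAlgebra ℂ L] {α β γ : ℂ} {D : Module.End ℂ L}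

theorem abgDer_div {c : ℂ} (hc : c ≠ 0) :
    abgDer (α / c) (β / c) (γ / c) L = abgDer α β γ L := by
  ext D
  refine forall₂_congr fun x y => ?_
  rw [← (smul_right_injective L hc).eq_iff]
  simp only [smul_add, smul_smul, mul_div_cancel₀ _ hc]

/-- If `β ≠ γ`, an `(α,β,γ)`-derivation can be moved across the bracket: add the defining
identities for `(x, y)` and `(y, x)`. -/
theorem lie_apply_eq_of_mem_abgDer (h : β ≠ γ) (hD : D ∈ abgDer α β γ L) (x y : L) :
    ⁅x, D y⁆ = ⁅D x, y⁆ := by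
  have hxy := hD x y
  have hyx := hD y x
  rw [← lie_skew y x, ← lie_skew (D y) x, ← lie_skew y (D x), map_neg] at hyx
  have key : (β - γ) • ⁅x, D y⁆ = (β - γ) • ⁅D x, y⁆ := by
    linear_combination (norm := module) hxy + hyx
  exact smul_right_injective L (sub_ne_zero.mpr h) key

theorem mem_abgDer_iff_of_ne (h : β ≠ γ) :
    D ∈ abgDer α β γ L ↔
      (∀ x y : L, ⁅x, D y⁆ = ⁅D x, y⁆) ∧ ∀ x y : L, α • D ⁅x, y⁆ = (β + γ) • ⁅D x, y⁆ := by
  constructor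
  · intro hD
    have hs := lie_apply_eq_of_mem_abgDer h hD
    exact ⟨hs, fun x y => by rw [hD x y, hs, add_smul]⟩
  · rintro ⟨hs, hD⟩ x y
    rw [hD, hs, add_smul]

end

/-- For a complex Lie algebra `L` and any `α β γ : ℂ`, there exists `δ : ℂ` such that
`D(α,β,γ)(L)` equals one of `D(δ,0,0)(L)`, `D(δ,1,−1)(L)`, `D(δ,1,0)(L)`, `D(δ,1,1)(L)`. -/
theorem abgDer_eq_one_of_four (L : Type*) [LieRing L] [LieAlgebra ℂ L] (α β γ : ℂ) :
    ∃ δ : ℂ, abgDer α β γ L = abgDer δ 0 0 L ∨ abgDer α β γ L = abgDer δ 1 (-1) L ∨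
      abgDer α β γ L = abgDer δ 1 0 L ∨ abgDer α β γ L = abgDer δ 1 1 L := by
  rcases eq_or_ne β γ with rfl | hne
  · rcases eq_or_ne β 0 with rfl | hβ
    · exact ⟨α, Or.inl rfl⟩
    · refine ⟨α / β, Or.inr (Or.inr (Or.inr ?_))⟩
      rw [← abgDer_div hβ, div_self hβ]
  · rcases eq_or_ne (β + γ) 0 with hsum | hsum
    · obtain rfl : γ = -β := (neg_eq_of_add_eq_zero_right hsum).symm
      have hβ : β ≠ 0 := by
        rintro rfl
        simp at hne
      refine ⟨α / β, Or.inr (Or.inl ?_)⟩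
      rw [← abgDer_div hβ, neg_div, div_self hβ]
    · refine ⟨α / (β + γ), Or.inr (Or.inr (Or.inl ?_))⟩
      have key : abgDer α β γ L = abgDer α (β + γ) 0 L := by
        ext D
        rw [mem_abgDer_iff_of_ne hne, mem_abgDer_iff_of_ne hsum, add_zero]
      rw [key, ← abgDer_div hsum, div_self hsum, zero_div]
end

section
/- Let L be a complex Lie algebra. Then the subspace D(0,1,−1)(L) = {A ∈ End(L) | ⁅A x, y⁆ = ⁅x, A y⁆ for all x, y ∈ L} is closed under the Jordan product: for all A, B ∈ D(0,1,−1)(L), the operator (1/2)(A∘B + B∘A) again belongs to D(0,1,−1)(L). -/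
/-- The space `D(0,1,−1)(L) = {A ∈ End(L) | ⁅A x, y⁆ = ⁅x, A y⁆ for all x, y}` of a
complex Lie algebra `L` is closed under the Jordan product `(1/2)(A∘B + B∘A)`. -/
theorem jordan_mem_of_quasicentroid {L : Type*} [LieRing L] [LieAlgebra ℂ L]
    (A B : Module.End ℂ L)
    (hA : ∀ x y : L, ⁅A x, y⁆ = ⁅x, A y⁆)
    (hB : ∀ x y : L, ⁅B x, y⁆ = ⁅x, B y⁆) :
    ∀ x y : L, ⁅(((1 : ℂ) / 2) • (A * B + B * A)) x, y⁆
      = ⁅x, (((1 : ℂ) / 2) • (A * B + B * A)) y⁆ := by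
  intro x y
  simp only [LinearMap.smul_apply, LinearMap.add_apply, Module.End.mul_apply, smul_lie, lie_smul,
    add_lie, lie_add, hA, hB]
  rw [add_comm]
end

section
/- Let L be a complex Lie algebra. Then D(1,1,−1)(L) = D(0,1,−1)(L) ∩ D(1,0,0)(L), i.e. a linear endomorphism D of L satisfies D⁅x,y⁆ = ⁅D x, y⁆ − ⁅x, D y⁆ for all x, y ∈ L if and only if it satisfies both ⁅D x, y⁆ = ⁅x, D y⁆ for all x, y and D⁅x,y⁆ = 0 for all x, y. -/
/-- If `D ⁅x, y⁆ = ⁅D x, y⁆ - ⁅x, D y⁆`, the right-hand side is symmetric in `x` and `y` while the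
left-hand side is skew, so both vanish. -/
theorem map_lie_eq_lie_sub_lie_iff {L : Type*} [LieRing L] [LieAlgebra ℂ L]
    (D : Module.End ℂ L) :
    (∀ x y : L, D ⁅x, y⁆ = ⁅D x, y⁆ - ⁅x, D y⁆) ↔
      ((∀ x y : L, ⁅D x, y⁆ = ⁅x, D y⁆) ∧ ∀ x y : L, D ⁅x, y⁆ = 0) := by
  constructor
  · intro h
    have map_lie_zero : ∀ x y : L, D ⁅x, y⁆ = 0 := by
      intro x y
      have symm : D ⁅y, x⁆ = D ⁅x, y⁆ := by
        rw [h y x, h x y, ← lie_skew x (D y), ← lie_skew (D x) y]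
        abel
      rw [← lie_skew y x, map_neg] at symm
      have : IsAddTorsionFree L := .of_isTorsionFree ℂ L
      exact self_eq_neg.mp symm.symm
    exact ⟨fun x y => sub_eq_zero.mp ((h x y).symm.trans (map_lie_zero x y)), map_lie_zero⟩
  · rintro ⟨h, h0⟩ x y
    rw [h0, h, sub_self]

/-- For a complex Lie algebra `L`: `D(1,1,−1)(L) = D(0,1,−1)(L) ∩ D(1,0,0)(L)`; equivalently,
`D ⁅x,y⁆ = ⁅D x, y⁆ − ⁅x, D y⁆` for all `x, y` iff `⁅D x, y⁆ = ⁅x, D y⁆` for all `x, y`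
and `D ⁅x,y⁆ = 0` for all `x, y`. -/
theorem abgDer_one_one_neg_one (L : Type*) [LieRing L] [LieAlgebra ℂ L] :
    abgDer 1 1 (-1) L = abgDer 0 1 (-1) L ⊓ abgDer 1 0 0 L ∧
    ∀ D : Module.End ℂ L,
      (∀ x y : L, D ⁅x, y⁆ = ⁅D x, y⁆ - ⁅x, D y⁆) ↔
        ((∀ x y : L, ⁅D x, y⁆ = ⁅x, D y⁆) ∧ ∀ x y : L, D ⁅x, y⁆ = 0) := by
  refine ⟨?_, map_lie_eq_lie_sub_lie_iff⟩
  ext D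
  simpa [abgDer, -lie_skew, ← sub_eq_add_neg, sub_eq_zero, eq_comm (a := (0 : L))] using
    map_lie_eq_lie_sub_lie_iff D
end

section
/- Let L be a complex Lie algebra and δ a complex number. Then D(δ,1,0)(L) = D(0,1,−1)(L) ∩ D(2δ,1,1)(L); in particular, D(δ,1,0)(L) ⊆ D(0,1,−1)(L) and D(δ,1,0)(L) ⊆ D(2δ,1,1)(L). -/
theorem mem_abgDer {α β γ : ℂ} {L : Type*} [LieRing L] [LieAlgebra ℂ L] {D : Module.End ℂ L} :
    D ∈ abgDer α β γ L ↔ ∀ x y : L, α • D ⁅x, y⁆ = β • ⁅D x, y⁆ + γ • ⁅x, D y⁆ :=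
  Iff.rfl

/-- By skew-symmetry, a `(δ,1,0)`-derivation is also a `(δ,0,1)`-derivation. -/
theorem smul_apply_lie_eq_lie_apply {L : Type*} [LieRing L] [LieAlgebra ℂ L] {δ : ℂ}
    {D : Module.End ℂ L} (h : ∀ x y : L, δ • D ⁅x, y⁆ = ⁅D x, y⁆) (x y : L) :
    δ • D ⁅x, y⁆ = ⁅x, D y⁆ := by
  rw [← lie_skew x y, map_neg, smul_neg, h y x, lie_skew]

/-- For a complex Lie algebra `L` and `δ : ℂ`:
`D(δ,1,0)(L) = D(0,1,−1)(L) ∩ D(2δ,1,1)(L)`; in particular `D(δ,1,0)(L) ⊆ D(0,1,−1)(L)`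
and `D(δ,1,0)(L) ⊆ D(2δ,1,1)(L)`. -/
theorem abgDer_delta_one_zero (L : Type*) [LieRing L] [LieAlgebra ℂ L] (δ : ℂ) :
    abgDer δ 1 0 L = abgDer 0 1 (-1) L ⊓ abgDer (2 * δ) 1 1 L ∧
    abgDer δ 1 0 L ≤ abgDer 0 1 (-1) L ∧
    abgDer δ 1 0 L ≤ abgDer (2 * δ) 1 1 L := by
  have key : abgDer δ 1 0 L = abgDer 0 1 (-1) L ⊓ abgDer (2 * δ) 1 1 L := by
    ext D
    simp only [Submodule.mem_inf, mem_abgDer, one_smul, zero_smul, add_zero, neg_smul, mul_smul,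
      two_smul]
    constructor
    · intro h
      have h' := smul_apply_lie_eq_lie_apply h
      refine ⟨fun x y => ?_, fun x y => ?_⟩
      · rw [← h x y, ← h' x y, add_neg_cancel]
      · rw [← h x y, ← h' x y]
    · rintro ⟨h₁, h₂⟩ x y
      have hxy : ⁅D x, y⁆ = ⁅x, D y⁆ := add_neg_eq_zero.mp (h₁ x y).symm
      have h := h₂ x y
      rw [← hxy, ← two_smul ℂ, ← two_smul ℂ] at h
      exact smul_right_injective L (two_ne_zero (α := ℂ)) h
  exact ⟨key, key.le.trans inf_le_left, key.le.trans inf_le_right⟩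
end

section
/- Let L be a finite-dimensional complex Lie algebra. Then dim (D(1,0,0)(L) ∩ D(0,1,0)(L)) = (dim L − dim L²)·dim C(L). -/
/-- The derived subalgebra `L² = ⁅L,L⁆`: the linear span of all brackets. -/
def derivedSub (L : Type*) [LieRing L] [LieAlgebra ℂ L] : Submodule ℂ L :=
  Submodule.span ℂ {z : L | ∃ x y : L, ⁅x, y⁆ = z}

/-- The center `C(L) = {x ∈ L | ⁅x,y⁆ = 0 for all y}` of a complex Lie algebra. -/
def centerSub (L : Type*) [LieRing L] [LieAlgebra ℂ L] : Submodule ℂ L where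
  carrier := {x | ∀ y : L, ⁅x, y⁆ = 0}
  zero_mem' := by intro y; simp
  add_mem' := by intro a b ha hb y; rw [add_lie, ha y, hb y, add_zero]
  smul_mem' := by intro c x hx y; rw [smul_lie, hx y, smul_zero]

theorem mem_abgDer_inf_iff {L : Type*} [LieRing L] [LieAlgebra ℂ L] {D : Module.End ℂ L} :
    D ∈ abgDer 1 0 0 L ⊓ abgDer 0 1 0 L ↔
      derivedSub L ≤ LinearMap.ker D ∧ ∀ x, D x ∈ centerSub L := by
  have h₁ : D ∈ abgDer 1 0 0 L ↔ derivedSub L ≤ LinearMap.ker D := by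
    change (∀ x y : L, _ = _) ↔ _
    rw [derivedSub, Submodule.span_le]
    constructor
    · rintro h _ ⟨x, y, rfl⟩
      simpa using h x y
    · intro h x y
      simpa using h ⟨x, y, rfl⟩
  have h₂ : D ∈ abgDer 0 1 0 L ↔ ∀ x, D x ∈ centerSub L := by
    change (∀ x y : L, _ = _) ↔ ∀ x y : L, _ = _
    simp [eq_comm]
  rw [Submodule.mem_inf, h₁, h₂]

/-- The endomorphisms in `D(1,0,0)(L) ∩ D(0,1,0)(L)` are the linear maps `L / L² → C(L)`. -/
def abgDerInfEquiv (L : Type*) [LieRing L] [LieAlgebra ℂ L] :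
    ↥(abgDer 1 0 0 L ⊓ abgDer 0 1 0 L) ≃ₗ[ℂ] (L ⧸ derivedSub L →ₗ[ℂ] centerSub L) where
  toFun D := (derivedSub L).liftQ
    (D.1.codRestrict (centerSub L) (mem_abgDer_inf_iff.1 D.2).2)
    (by rw [LinearMap.ker_codRestrict]; exact (mem_abgDer_inf_iff.1 D.2).1)
  invFun f := ⟨(centerSub L).subtype ∘ₗ f ∘ₗ (derivedSub L).mkQ, mem_abgDer_inf_iff.2
    ⟨fun x hx => by simp [(Submodule.Quotient.mk_eq_zero _).2 hx], fun x => (f _).2⟩⟩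
  map_add' _ _ := by ext; rfl
  map_smul' _ _ := by ext; rfl
  left_inv _ := by ext; rfl
  right_inv _ := by ext; rfl

/-- For a finite-dimensional complex Lie algebra `L`,
`dim (D(1,0,0)(L) ∩ D(0,1,0)(L)) = (dim L − dim L²) · dim C(L)`. -/
theorem finrank_inf_abgDer (L : Type*) [LieRing L] [LieAlgebra ℂ L]
    [FiniteDimensional ℂ L] :
    Module.finrank ℂ ↥(abgDer 1 0 0 L ⊓ abgDer 0 1 0 L) =
      (Module.finrank ℂ L - Module.finrank ℂ ↥(derivedSub L)) *
        Module.finrank ℂ ↥(centerSub L) := by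
  rw [(abgDerInfEquiv L).finrank_eq, Module.finrank_linearMap, Submodule.finrank_quotient]
end

section
/- Let L be a finite-dimensional complex Lie algebra. Then for every complex number α the following inequalities hold: (dim L − dim L²)·dim C(L) ≤ dim D(α,1,0)(L) ≤ dim D(0,1,−1)(L); dim D(α,1,0)(L) ≤ dim D(2α,1,1)(L); and (dim L − dim L²)·dim C(L) ≤ dim D(α,1,1)(L). -/
/-- An endomorphism killing `L²` with values in the center is an `(α,β,γ)`-derivation, which gives
a lower bound for the dimension of the space of `(α,β,γ)`-derivations. -/
theorem finrank_mul_finrank_centerSub_le (L : Type*) [LieRing L] [LieAlgebra ℂ L]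
    [FiniteDimensional ℂ L] (α β γ : ℂ) :
    (Module.finrank ℂ L - Module.finrank ℂ ↥(derivedSub L)) *
      Module.finrank ℂ ↥(centerSub L) ≤ Module.finrank ℂ ↥(abgDer α β γ L) := by
  have hquot := (derivedSub L).finrank_quotient_add_finrank
  rw [← hquot, Nat.add_sub_cancel, ← Module.finrank_linearMap ℂ ℂ]
  let φ : ((L ⧸ derivedSub L) →ₗ[ℂ] ↥(centerSub L)) →ₗ[ℂ] Module.End ℂ L :=
    { toFun := fun f => (centerSub L).subtype ∘ₗ f ∘ₗ (derivedSub L).mkQ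
      map_add' := fun _ _ => rfl
      map_smul' := fun _ _ => rfl }
  have hφ : ∀ f, φ f ∈ abgDer α β γ L := by
    intro f x y
    have hbracket : φ f ⁅x, y⁆ = 0 := by
      have hmk : (derivedSub L).mkQ ⁅x, y⁆ = 0 :=
        (Submodule.Quotient.mk_eq_zero _).2 (Submodule.subset_span ⟨x, y, rfl⟩)
      change ((f ((derivedSub L).mkQ ⁅x, y⁆) : ↥(centerSub L)) : L) = 0
      rw [hmk, map_zero, ZeroMemClass.coe_zero]
    have hcentral : ∀ u v : L, ⁅φ f u, v⁆ = 0 := fun u =>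
      (f ((derivedSub L).mkQ u)).2
    rw [hbracket, hcentral, ← lie_skew, hcentral]
    simp
  refine LinearMap.finrank_le_finrank_of_injective (f := φ.codRestrict _ hφ) ?_
  intro f g hfg
  refine Submodule.linearMap_qext _ (LinearMap.ext fun x => Subtype.ext ?_)
  exact LinearMap.congr_fun (congrArg Subtype.val hfg) x

theorem lie_apply_of_mem_abgDer_one_zero {L : Type*} [LieRing L] [LieAlgebra ℂ L] {α : ℂ}
    {D : Module.End ℂ L} (hD : D ∈ abgDer α 1 0 L) (x y : L) :
    ⁅D x, y⁆ = α • D ⁅x, y⁆ ∧ ⁅x, D y⁆ = α • D ⁅x, y⁆ := by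
  have hleft : ∀ u v : L, ⁅D u, v⁆ = α • D ⁅u, v⁆ := fun u v => by
    have huv := hD u v
    rw [one_smul, zero_smul, add_zero] at huv
    exact huv.symm
  refine ⟨hleft x y, ?_⟩
  rw [← lie_skew, hleft, ← lie_skew x y, map_neg, smul_neg]

theorem abgDer_one_zero_le_abgDer_zero_one_neg_one (L : Type*) [LieRing L] [LieAlgebra ℂ L]
    (α : ℂ) : abgDer α 1 0 L ≤ abgDer 0 1 (-1) L := by
  intro D hD x y
  obtain ⟨hleft, hright⟩ := lie_apply_of_mem_abgDer_one_zero hD x y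
  rw [hleft, hright]
  module

theorem abgDer_one_zero_le_abgDer_two_mul_one_one (L : Type*) [LieRing L] [LieAlgebra ℂ L]
    (α : ℂ) : abgDer α 1 0 L ≤ abgDer (2 * α) 1 1 L := by
  intro D hD x y
  obtain ⟨hleft, hright⟩ := lie_apply_of_mem_abgDer_one_zero hD x y
  rw [hleft, hright]
  module

/-- For a finite-dimensional complex Lie algebra `L` and every `α : ℂ`:
`(dim L − dim L²)·dim C(L) ≤ dim D(α,1,0)(L) ≤ dim D(0,1,−1)(L)`;
`dim D(α,1,0)(L) ≤ dim D(2α,1,1)(L)`; and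
`(dim L − dim L²)·dim C(L) ≤ dim D(α,1,1)(L)`. -/
theorem abgDer_dim_inequalities (L : Type*) [LieRing L] [LieAlgebra ℂ L]
    [FiniteDimensional ℂ L] (α : ℂ) :
    ((Module.finrank ℂ L - Module.finrank ℂ ↥(derivedSub L)) *
        Module.finrank ℂ ↥(centerSub L) ≤ Module.finrank ℂ ↥(abgDer α 1 0 L) ∧
      Module.finrank ℂ ↥(abgDer α 1 0 L) ≤ Module.finrank ℂ ↥(abgDer 0 1 (-1) L)) ∧
    Module.finrank ℂ ↥(abgDer α 1 0 L) ≤ Module.finrank ℂ ↥(abgDer (2 * α) 1 1 L) ∧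
    (Module.finrank ℂ L - Module.finrank ℂ ↥(derivedSub L)) *
        Module.finrank ℂ ↥(centerSub L) ≤ Module.finrank ℂ ↥(abgDer α 1 1 L) := by
  exact ⟨⟨finrank_mul_finrank_centerSub_le L α 1 0,
      Submodule.finrank_mono (abgDer_one_zero_le_abgDer_zero_one_neg_one L α)⟩,
    Submodule.finrank_mono (abgDer_one_zero_le_abgDer_two_mul_one_one L α),
    finrank_mul_finrank_centerSub_le L α 1 1⟩
end

section
/- Let V be a finite-dimensional normed complex vector space, let B : V × V → V be a bilinear map making V a complex Lie algebra, and let B₀ : V × V → V be a bilinear map. Suppose there is a family U(ε), ε ∈ (0,1], of invertible linear endomorphisms of V such that for all x, y ∈ V the limit lim_{ε→0⁺} U(ε)⁻¹(B(U(ε)x, U(ε)y)) exists and equals B₀(x,y) (i.e. (V, B₀) is a one-parametric continuous contraction of (V, B)). Then for all complex numbers α, β, γ, dim {D ∈ End(V) | α·D(B(x,y)) = β·B(Dx, y) + γ·B(x, Dy) for all x, y ∈ V} ≤ dim {D ∈ End(V) | α·D(B₀(x,y)) = β·B₀(Dx, y) + γ·B₀(x, Dy) for all x, y ∈ V}. 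-/
/-- The space of `(α,β,γ)`-derivations of an algebra on `V` with multiplication given
by the bilinear map `B`. -/
def bilinDer {V : Type*} [AddCommGroup V] [Module ℂ V] (α β γ : ℂ)
    (B : V →ₗ[ℂ] V →ₗ[ℂ] V) : Submodule ℂ (Module.End ℂ V) where
  carrier := {D | ∀ x y : V, α • D (B x y) = β • B (D x) y + γ • B x (D y)}
  zero_mem' := by intro x y; simp
  add_mem' := by
    intro a b ha hb x y
    simp only [LinearMap.add_apply, map_add, smul_add]
    rw [ha x y, hb x y]
    abel
  smul_mem' := by
    intro c D hD x y
    simp only [LinearMap.smul_apply, map_smul]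
    rw [smul_comm α c, hD x y, smul_add, smul_comm c β, smul_comm c γ]

open Filter Topology in
/-- Lower semicontinuity of the rank, phrased for kernels: if linear maps converge pointwise,
then eventually their kernels are at most as large as the kernel of the limit. -/
theorem eventually_finrank_ker_le_of_tendsto {𝕜 E F ι : Type*} [NontriviallyNormedField 𝕜]
    [CompleteSpace 𝕜] [AddCommGroup E] [Module 𝕜 E] [FiniteDimensional 𝕜 E]
    [NormedAddCommGroup F] [NormedSpace 𝕜 F] {l : Filter ι} {T : ι → E →ₗ[𝕜] F}
    {T₀ : E →ₗ[𝕜] F} (hT : ∀ x, Tendsto (fun i => T i x) l (𝓝 (T₀ x))) :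
    ∀ᶠ i in l, Module.finrank 𝕜 (LinearMap.ker (T i)) ≤
      Module.finrank 𝕜 (LinearMap.ker T₀) := by
  let b := Module.finBasis 𝕜 (LinearMap.range T₀)
  choose e he using fun k => (b k).2
  have hind : LinearIndependent 𝕜 (fun k => T₀ (e k)) := by
    simp only [he]
    exact b.linearIndependent.map' (LinearMap.range T₀).subtype (Submodule.ker_subtype _)
  have hlim : Tendsto (fun i k => T i (e k)) l (𝓝 fun k => T₀ (e k)) :=
    tendsto_pi_nhds.2 fun k => hT (e k)
  filter_upwards [hlim.eventually hind.eventually] with i hi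
  have hrange : Module.finrank 𝕜 (LinearMap.range T₀) ≤
      Module.finrank 𝕜 (LinearMap.range (T i)) := by
    have hi' : LinearIndependent 𝕜 (fun k => (T i).rangeRestrict (e k)) :=
      LinearIndependent.of_comp (LinearMap.range (T i)).subtype hi
    simpa using hi'.fintype_card_le_finrank
  have h₀ := T₀.finrank_range_add_finrank_ker
  have h₁ := (T i).finrank_range_add_finrank_ker
  omega

/-- The multiplication `B` transported along a linear automorphism `U`. -/
def bilinConj {V : Type*} [AddCommGroup V] [Module ℂ V] (U : V ≃ₗ[ℂ] V)
    (B : V →ₗ[ℂ] V →ₗ[ℂ] V) : V →ₗ[ℂ] V →ₗ[ℂ] V :=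
  (B.compl₁₂ U.toLinearMap U.toLinearMap).compr₂ U.symm.toLinearMap

theorem bilinConj_apply {V : Type*} [AddCommGroup V] [Module ℂ V] (U : V ≃ₗ[ℂ] V)
    (B : V →ₗ[ℂ] V →ₗ[ℂ] V) (x y : V) : bilinConj U B x y = U.symm (B (U x) (U y)) :=
  rfl

/-- Conjugation embeds the derivations of `B` into those of the transported multiplication. -/
theorem finrank_bilinDer_le_bilinConj {V : Type*} [AddCommGroup V] [Module ℂ V]
    [FiniteDimensional ℂ V] (α β γ : ℂ) (U : V ≃ₗ[ℂ] V) (B : V →ₗ[ℂ] V →ₗ[ℂ] V) :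
    Module.finrank ℂ (bilinDer α β γ B) ≤
      Module.finrank ℂ (bilinDer α β γ (bilinConj U B)) := by
  rw [← LinearEquiv.finrank_map_eq U.symm.conj (bilinDer α β γ B)]
  refine Submodule.finrank_mono ?_
  rintro _ ⟨D, hD, rfl⟩ x y
  have h := congrArg U.symm (hD (U x) (U y))
  simpa [bilinConj_apply, LinearEquiv.conj_apply] using h

/-- The failure of an endomorphism to be an `(α,β,γ)`-derivation, on pairs of vectors from
the family `b`. -/
def bilinDerDefect {V ι : Type*} [AddCommGroup V] [Module ℂ V] (b : ι → V) (α β γ : ℂ)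
    (B : V →ₗ[ℂ] V →ₗ[ℂ] V) : Module.End ℂ V →ₗ[ℂ] (ι × ι → V) where
  toFun D p := α • D (B (b p.1) (b p.2)) -
    (β • B (D (b p.1)) (b p.2) + γ • B (b p.1) (D (b p.2)))
  map_add' D D' := by
    ext p
    simp only [LinearMap.add_apply, map_add, smul_add, Pi.add_apply]
    abel
  map_smul' c D := by
    ext p
    simp only [LinearMap.smul_apply, map_smul, RingHom.id_apply, Pi.smul_apply]
    module

theorem ker_bilinDerDefect {V ι : Type*} [AddCommGroup V] [Module ℂ V]
    (b : Module.Basis ι ℂ V) (α β γ : ℂ) (B : V →ₗ[ℂ] V →ₗ[ℂ] V) :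
    LinearMap.ker (bilinDerDefect b α β γ B) = bilinDer α β γ B := by
  ext D
  rw [LinearMap.mem_ker]
  constructor
  · intro h
    have hB : α • B.compr₂ D = β • B.comp D + γ • B.compl₂ D :=
      b.ext fun i => b.ext fun j => by
        simpa using sub_eq_zero.1 (congrFun h (i, j))
    intro x y
    simpa using LinearMap.congr_fun₂ hB x y
  · intro h
    ext p
    exact sub_eq_zero.2 (h (b p.1) (b p.2))

/-- If a bilinear map `B₀` on a finite-dimensional normed complex vector space `V` is a
one-parametric continuous contraction of a Lie algebra structure `B` on `V` — i.e.
`B₀(x,y) = lim_{ε→0⁺} U(ε)⁻¹ (B (U(ε) x) (U(ε) y))` for a family `U(ε)`, `ε ∈ (0,1]`, of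
invertible linear endomorphisms — then for all `α, β, γ ∈ ℂ` the dimension of the space
of `(α,β,γ)`-derivations of `(V,B)` is at most that of `(V,B₀)`. -/
theorem finrank_bilinDer_le_of_contraction
    {V : Type*} [NormedAddCommGroup V] [NormedSpace ℂ V] [FiniteDimensional ℂ V]
    (B B₀ : V →ₗ[ℂ] V →ₗ[ℂ] V)
    (hanti : ∀ x : V, B x x = 0)
    (hjac : ∀ x y z : V, B x (B y z) + B z (B x y) + B y (B z x) = 0)
    (U : ℝ → (V ≃ₗ[ℂ] V))
    (hlim : ∀ x y : V,
      Filter.Tendsto (fun ε : ℝ => (U ε).symm (B (U ε x) (U ε y)))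
        (nhdsWithin 0 (Set.Ioc 0 1)) (nhds (B₀ x y)))
    (α β γ : ℂ) :
    Module.finrank ℂ ↥(bilinDer α β γ B) ≤ Module.finrank ℂ ↥(bilinDer α β γ B₀) := by
  have hne : (nhdsWithin (0 : ℝ) (Set.Ioc 0 1)).NeBot := by
    rw [nhdsWithin_Ioc_eq_nhdsGT zero_lt_one]
    infer_instance
  let b := Module.finBasis ℂ V
  have hT : ∀ D : Module.End ℂ V, Filter.Tendsto
      (fun ε => bilinDerDefect b α β γ (bilinConj (U ε) B) D)
      (nhdsWithin 0 (Set.Ioc 0 1)) (nhds (bilinDerDefect b α β γ B₀ D)) := fun D =>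
    tendsto_pi_nhds.2 fun p =>
      (((D.continuous_of_finiteDimensional.tendsto _).comp (hlim _ _)).const_smul α).sub
        (((hlim _ _).const_smul β).add ((hlim _ _).const_smul γ))
  obtain ⟨ε, hε⟩ := (eventually_finrank_ker_le_of_tendsto hT).exists
  rw [ker_bilinDerDefect, ker_bilinDerDefect] at hε
  exact (finrank_bilinDer_le_bilinConj α β γ (U ε) B).trans hε
end
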